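/- arXiv:1609.04874 — 2 statements merged into one kernel-verified Lean document; each statement's English description precedes it below -/
import Mathlib

section
/- Let G be a group, S and T G-sets, and ρ : ℤ[S] → ℤ[T] a G-equivariant additive homomorphism. Suppose that S has finitely many G-orbits, T has finitely many G-orbits, and the stabilizer in G of every element of T is finite. Let ν : ker ρ → ℝ≥0 be any G-invariant subadditive function, i.e. ν(x + y) ≤ ν(x) + ν(y) for all x, y ∈ ker ρ and ν(g • x) = ν(x) for all g ∈ G and x ∈ ker ρ. Then for every natural number n there exists a real number B such that every x ∈ ker ρ with ‖x‖_S ≤ n satisfies ν(x) ≤ B. -/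
open Finsupp

/-- Action of `g : G` on the permutation module `ℤ[S]`, permuting the basis. -/
def gact {G S : Type*} [Group G] [MulAction G S] (g : G) (x : S →₀ ℤ) : S →₀ ℤ :=
  Finsupp.equivMapDomain (MulAction.toPerm g) x

/-- The ℓ1-norm on `ℤ[S]`. -/
def l1 {S : Type*} (x : S →₀ ℤ) : ℕ := x.support.sum fun s => (x s).natAbs

/-- `x` is a part of `y`, written `x ⪯_S y`. -/
def IsPart {S : Type*} (x y : S →₀ ℤ) : Prop := ∀ s, x s ^ 2 ≤ x s * y s

/-- `x` and `y` have trivial S-intersection. -/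
def SIntTrivial {S : Type*} (x y : S →₀ ℤ) : Prop := ∀ s, 0 ≤ x s * y s

/-- membership in `D₁ = S ∪ (-S) ⊆ ℤ[S]`. -/
def InD1 {S : Type*} (x : S →₀ ℤ) : Prop :=
  ∃ s, x = Finsupp.single s 1 ∨ x = Finsupp.single s (-1)

/-- `x` and `y` have nontrivial ρ-intersection. -/
def RhoInt {S T : Type*} (ρ : (S →₀ ℤ) →+ (T →₀ ℤ)) (x y : S →₀ ℤ) : Prop :=
  ∃ x₁ y₁, InD1 x₁ ∧ InD1 y₁ ∧ IsPart x₁ x ∧ IsPart y₁ y ∧ ∃ t, ρ x₁ t * ρ y₁ t < 0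

/-- membership in `D_n`. -/
def InD {S T : Type*} (ρ : (S →₀ ℤ) →+ (T →₀ ℤ)) (n : ℕ) (x : S →₀ ℤ) : Prop :=
  ∃ c : ℕ → (S →₀ ℤ), (∀ i < n, InD1 (c i)) ∧ x = ∑ i ∈ Finset.range n, c i ∧
    ∀ k, 1 ≤ k → k < n →
      SIntTrivial (∑ i ∈ Finset.range k, c i) (c k) ∧
      RhoInt ρ (∑ i ∈ Finset.range k, c i) (c k)

/-- `x` is ρ-connected. -/
def RhoConnected {S T : Type*} (ρ : (S →₀ ℤ) →+ (T →₀ ℤ)) (x : S →₀ ℤ) : Prop :=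
  ∃ n, 1 ≤ n ∧ InD ρ n x

/-- `ρ` is G-equivariant. -/
def Equivariant (G : Type*) {S T : Type*} [Group G] [MulAction G S] [MulAction G T]
    (ρ : (S →₀ ℤ) →+ (T →₀ ℤ)) : Prop :=
  ∀ (g : G) (x : S →₀ ℤ), ρ (gact g x) = gact g (ρ x)

/-- `S` has finitely many G-orbits. -/
def FinitelyManyOrbits (G S : Type*) [Group G] [MulAction G S] : Prop :=
  ∃ R : Finset S, ∀ s : S, ∃ (g : G) (r : S), r ∈ R ∧ g • r = s

/-- every element of `T` has finite stabilizer. -/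
def FiniteStabilizers (G T : Type*) [Group G] [MulAction G T] : Prop :=
  ∀ t : T, {g : G | g • t = t}.Finite

/-!
Join two elements of `S` when the images under `ρ` of the corresponding basis vectors overlap. A cut
of the support of `x ∈ ker ρ` that crosses no edge of this graph separates `ρ x = 0` into two parts
with disjoint supports, so both parts of `x` lie in `ker ρ`. By subadditivity it is therefore enough
to bound `ν` on kernel elements with connected support.

Finitely many orbits in `S` and finite stabilizers in `T` make the graph locally finite. Up to
translation, a connected support contains one of finitely many orbit representatives, hence lies in
a fixed finite ball, and there are only finitely many elements of bounded norm supported there.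
-/

section GraphBalls

variable {V W : Type*} {Γ : SimpleGraph V} {Δ : SimpleGraph W}

theorem finite_ball_of_finite_neighborSet (hΓ : ∀ v, (Γ.neighborSet v).Finite) (c : V) (n : ℕ) :
    (Γ.ball c n).Finite := by
  induction n generalizing c with
  | zero => simp
  | succ n ih =>
    refine ((hΓ c).biUnion fun u _ => ih u).insert c |>.subset fun v hv => ?_
    rw [SimpleGraph.mem_ball_comm, SimpleGraph.mem_ball] at hv
    obtain ⟨p, hp⟩ := SimpleGraph.exists_walk_of_edist_ne_top hv.ne_top
    rw [← hp] at hv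
    cases p with
    | nil => exact Set.mem_insert _ _
    | @cons _ u _ hcu q =>
      have hq : q.length < n := by
        rw [SimpleGraph.Walk.length_cons] at hv
        exact Nat.lt_of_succ_lt_succ (by exact_mod_cast hv)
      have hvu : v ∈ Γ.ball u n := by
        rw [SimpleGraph.mem_ball_comm]
        exact q.edist_le.trans_lt (by exact_mod_cast hq)
      exact Set.mem_insert_of_mem _ (Set.mem_biUnion hcu hvu)

theorem hom_mem_ball (f : Γ →g Δ) {c v : V} {r : ℕ∞} (hv : v ∈ Γ.ball c r) :
    f v ∈ Δ.ball (f c) r := by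
  rw [SimpleGraph.mem_ball] at hv ⊢
  obtain ⟨p, hp⟩ := SimpleGraph.exists_walk_of_edist_ne_top hv.ne_top
  calc Δ.edist (f v) (f c) ≤ (p.map f).length := (p.map f).edist_le
    _ = Γ.edist v c := by rw [SimpleGraph.Walk.length_map, hp]
    _ < r := hv

theorem subset_ball_card_of_preconnected_induce {s : Finset V}
    (hs : (Γ.induce (s : Set V)).Preconnected) {c : V} (hc : c ∈ s) :
    (s : Set V) ⊆ Γ.ball c s.card := by
  intro v hv
  obtain ⟨p, hp⟩ := hs.exists_isPath ⟨v, hv⟩ ⟨c, hc⟩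
  have hlen : p.length < s.card := by simpa using hp.length_lt
  have hball : (⟨v, hv⟩ : (s : Set V)) ∈ (Γ.induce (s : Set V)).ball ⟨c, hc⟩ s.card :=
    p.edist_le.trans_lt (by exact_mod_cast hlen)
  exact hom_mem_ball (SimpleGraph.Embedding.induce (s : Set V)).toHom hball

theorem exists_cut_of_not_preconnected_induce {s : Set V} (hs : ¬ (Γ.induce s).Preconnected) :
    ∃ A : Set V, (∃ a ∈ s, a ∈ A) ∧ (∃ b ∈ s, b ∉ A) ∧
      ∀ v ∈ s, ∀ w ∈ s, v ∈ A → w ∉ A → ¬ Γ.Adj v w := by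
  simp only [SimpleGraph.Preconnected, not_forall] at hs
  obtain ⟨a, b, hab⟩ := hs
  refine ⟨Subtype.val '' {v | (Γ.induce s).Reachable a v}, ⟨a, a.2, a, .refl a, rfl⟩,
    ⟨b, b.2, ?_⟩, ?_⟩
  · rintro ⟨b', hb', hbb'⟩
    exact hab (Subtype.ext hbb' ▸ hb')
  · rintro _ - w hw ⟨v, hv, rfl⟩ hwA hvw
    have hadj : (Γ.induce s).Adj v ⟨w, hw⟩ := hvw
    exact hwA ⟨⟨w, hw⟩, hv.trans hadj.reachable, rfl⟩

end GraphBalls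

section L1Norm

variable {S : Type*}

theorem natAbs_apply_le_l1 (x : S →₀ ℤ) (s : S) : (x s).natAbs ≤ l1 x := by
  by_cases hs : s ∈ x.support
  · exact Finset.single_le_sum (f := fun s => (x s).natAbs) (fun _ _ => Nat.zero_le _) hs
  · simp [notMem_support_iff.1 hs]

theorem card_support_le_l1 (x : S →₀ ℤ) : x.support.card ≤ l1 x := by
  rw [Finset.card_eq_sum_ones]
  exact Finset.sum_le_sum fun s hs => Int.natAbs_pos.2 (mem_support_iff.1 hs)

theorem l1_filter_lt {x : S →₀ ℤ} {p : S → Prop} [DecidablePred p] {s : S} (hs : s ∈ x.support)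
    (hps : ¬ p s) : l1 (x.filter p) < l1 x := by
  have hfilter : l1 (x.filter p) = ∑ s ∈ x.support with p s, (x s).natAbs := by
    rw [l1, support_filter]
    exact Finset.sum_congr rfl fun s hs => by rw [filter_apply_pos p x (Finset.mem_filter.1 hs).2]
  rw [hfilter]
  exact Finset.sum_lt_sum_of_subset (Finset.filter_subset _ _) hs
    (fun h => hps (Finset.mem_filter.1 h).2) (Int.natAbs_pos.2 (mem_support_iff.1 hs))
    fun _ _ _ => Nat.zero_le _

theorem finite_setOf_support_subset_l1_le {A : Set S} (hA : A.Finite) (n : ℕ) :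
    {x : S →₀ ℤ | (x.support : Set S) ⊆ A ∧ l1 x ≤ n}.Finite := by
  refine (hA.toFinset.finsupp fun _ => Finset.Icc (-n : ℤ) n).finite_toSet.subset ?_
  rintro x ⟨hxA, hxn⟩
  refine Finset.mem_finsupp_iff.2 ⟨fun s hs => hA.mem_toFinset.2 (hxA hs), fun s _ => ?_⟩
  have hxs := (natAbs_apply_le_l1 x s).trans hxn
  exact Finset.mem_Icc.2 (by omega)

end L1Norm

section Action

variable {G S T : Type*} [Group G] [MulAction G S] [MulAction G T]

theorem gact_apply (g : G) (x : S →₀ ℤ) (s : S) : gact g x s = x (g⁻¹ • s) := rfl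

theorem gact_zero (g : G) : gact g (0 : S →₀ ℤ) = 0 := equivMapDomain_zero

theorem gact_single (g : G) (s : S) (a : ℤ) : gact g (single s a) = single (g • s) a :=
  equivMapDomain_single _ _ _

theorem mem_support_gact {g : G} {x : S →₀ ℤ} {s : S} :
    s ∈ (gact g x).support ↔ g⁻¹ • s ∈ x.support := by
  simp only [mem_support_iff, gact_apply]

theorem l1_gact (g : G) (x : S →₀ ℤ) : l1 (gact g x) = l1 x :=
  sum_equivMapDomain (MulAction.toPerm g) x fun _ a => a.natAbs

theorem finite_setOf_smul_eq (hstab : FiniteStabilizers G T) (u t : T) :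
    {g : G | g • u = t}.Finite := by
  obtain hempty | ⟨g₀, rfl⟩ := {g : G | g • u = t}.eq_empty_or_nonempty
  · exact hempty ▸ Set.finite_empty
  · refine ((hstab u).image (g₀ * ·)).subset fun g (hg : g • u = g₀ • u) =>
      ⟨g₀⁻¹ * g, ?_, mul_inv_cancel_left _ _⟩
    change (g₀⁻¹ * g) • u = u
    rw [mul_smul, hg, inv_smul_smul]

end Action

/-- The graph on `S` in which `s ≠ s'` are adjacent when the images under `ρ` of the corresponding
basis vectors have intersecting supports. It plays the role of the nontrivial ρ-intersections of
the paper, ignoring signs. -/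
def overlapGraph {S T : Type*} (ρ : (S →₀ ℤ) →+ (T →₀ ℤ)) : SimpleGraph S where
  Adj s s' := s ≠ s' ∧ ¬ Disjoint (ρ (single s 1)).support (ρ (single s' 1)).support
  symm := ⟨fun _ _ h => ⟨h.1.symm, fun hd => h.2 hd.symm⟩⟩
  loopless := ⟨fun _ h => h.1 rfl⟩

/-- The support of `x` spans a connected (possibly empty) subgraph of `overlapGraph ρ`. Kernel
elements with this property are the pieces into which the proof cuts a general kernel element. -/
def HasPreconnectedSupport {S T : Type*} (ρ : (S →₀ ℤ) →+ (T →₀ ℤ)) (x : S →₀ ℤ) : Prop :=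
  ((overlapGraph ρ).induce (x.support : Set S)).Preconnected

section Splitting

variable {S T : Type*} {ρ : (S →₀ ℤ) →+ (T →₀ ℤ)} {x : S →₀ ℤ}

theorem exists_mem_support_of_mem_support_map {t : T} (ht : t ∈ (ρ x).support) :
    ∃ s ∈ x.support, t ∈ (ρ (single s 1)).support := by
  classical
  have hx : ρ x = x.sum fun s a => a • ρ (single s 1) := by
    conv_lhs => rw [← sum_single x, map_finsuppSum]
    simp only [← map_zsmul, smul_single_one]
  rw [hx] at ht
  obtain ⟨s, hs, hts⟩ := Finset.mem_biUnion.1 (support_sum ht)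
  exact ⟨s, hs, support_smul hts⟩

theorem map_filter_eq_zero {p : S → Prop} [DecidablePred p] (hx : ρ x = 0)
    (hp : ∀ s ∈ x.support, ∀ s' ∈ x.support, p s → ¬ p s' → ¬ (overlapGraph ρ).Adj s s') :
    ρ (x.filter p) = 0 := by
  have hdisj : Disjoint (ρ (x.filter p)).support (ρ (x.filter fun s => ¬ p s)).support := by
    refine Finset.disjoint_left.2 fun t ht ht' => ?_
    obtain ⟨s, hs, hts⟩ := exists_mem_support_of_mem_support_map ht
    obtain ⟨s', hs', hts'⟩ := exists_mem_support_of_mem_support_map ht'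
    rw [support_filter, Finset.mem_filter] at hs hs'
    exact hp s hs.1 s' hs'.1 hs.2 hs'.2
      ⟨fun h => hs'.2 (h ▸ hs.2), Finset.not_disjoint_iff.2 ⟨t, hts, hts'⟩⟩
  have hneg : ρ (x.filter p) = -ρ (x.filter fun s => ¬ p s) := by
    rw [eq_neg_iff_add_eq_zero, ← map_add, filter_add_filter_not, hx]
  have hsupp : (ρ (x.filter p)).support = (ρ (x.filter fun s => ¬ p s)).support := by
    rw [hneg, support_neg]
  rwa [← hsupp, disjoint_self, Finset.bot_eq_empty, support_eq_empty] at hdisj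

theorem exists_add_eq_of_not_hasPreconnectedSupport (hx : ρ x = 0)
    (hconn : ¬ HasPreconnectedSupport ρ x) :
    ∃ y z, y + z = x ∧ (ρ y = 0 ∧ l1 y < l1 x) ∧ (ρ z = 0 ∧ l1 z < l1 x) := by
  classical
  obtain ⟨A, ⟨a, ha, haA⟩, ⟨b, hb, hbA⟩, hA⟩ := exists_cut_of_not_preconnected_induce hconn
  have hy : ρ (x.filter (· ∈ A)) = 0 := map_filter_eq_zero hx hA
  have hz : ρ (x.filter (· ∉ A)) = 0 :=
    map_filter_eq_zero hx fun s hs s' hs' hsA hsA' hadj =>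
      hA s' hs' s hs (not_not.1 hsA') hsA hadj.symm
  exact ⟨_, _, filter_add_filter_not x (· ∈ A), ⟨hy, l1_filter_lt hb hbA⟩,
    hz, l1_filter_lt ha (not_not.2 haA)⟩

end Splitting

section Equivariant

variable {G S T : Type*} [Group G] [MulAction G S] [MulAction G T] {ρ : (S →₀ ℤ) →+ (T →₀ ℤ)}

theorem mem_support_map_single_smul (hρ : Equivariant G ρ) (g : G) (s : S) (t : T) :
    t ∈ (ρ (single (g • s) 1)).support ↔ g⁻¹ • t ∈ (ρ (single s 1)).support := by
  rw [← gact_single, hρ, mem_support_gact]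

/-- Translation by `g`, as an endomorphism of the overlap graph. -/
def overlapGraph.smulHom (hρ : Equivariant G ρ) (g : G) : overlapGraph ρ →g overlapGraph ρ where
  toFun s := g • s
  map_rel' := by
    rintro s s' ⟨hne, hmeet⟩
    obtain ⟨t, hts, hts'⟩ := Finset.not_disjoint_iff.1 hmeet
    refine ⟨(MulAction.injective g).ne hne, Finset.not_disjoint_iff.2 ⟨g • t, ?_, ?_⟩⟩ <;>
      rwa [mem_support_map_single_smul hρ, inv_smul_smul]

theorem finite_setOf_mem_support_map_single (hρ : Equivariant G ρ) (hS : FinitelyManyOrbits G S)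
    (hstab : FiniteStabilizers G T) (t : T) : {s : S | t ∈ (ρ (single s 1)).support}.Finite := by
  obtain ⟨R, hR⟩ := hS
  have hfin : (⋃ r ∈ R, ⋃ u ∈ (ρ (single r 1)).support, (· • r) '' {g : G | g • u = t}).Finite :=
    R.finite_toSet.biUnion fun r _ => (ρ (single r 1)).support.finite_toSet.biUnion fun u _ =>
      (finite_setOf_smul_eq hstab u t).image _
  refine hfin.subset fun s hs => ?_
  obtain ⟨g, r, hr, rfl⟩ := hR s
  have hu : g⁻¹ • t ∈ (ρ (single r 1)).support := (mem_support_map_single_smul hρ g r t).1 hs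
  exact Set.mem_biUnion hr (Set.mem_biUnion hu ⟨g, smul_inv_smul g t, rfl⟩)

theorem overlapGraph.finite_neighborSet (hρ : Equivariant G ρ) (hS : FinitelyManyOrbits G S)
    (hstab : FiniteStabilizers G T) (s : S) : ((overlapGraph ρ).neighborSet s).Finite := by
  refine ((ρ (single s 1)).support.finite_toSet.biUnion fun t _ =>
    finite_setOf_mem_support_map_single hρ hS hstab t).subset ?_
  rintro s' ⟨-, hmeet⟩
  obtain ⟨t, hts, hts'⟩ := Finset.not_disjoint_iff.1 hmeet
  exact Set.mem_biUnion hts hts'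

theorem HasPreconnectedSupport.support_gact_subset_ball (hρ : Equivariant G ρ) {x : S →₀ ℤ}
    (hx : HasPreconnectedSupport ρ x) (g : G) {s : S} (hs : s ∈ x.support) :
    ((gact g x).support : Set S) ⊆ (overlapGraph ρ).ball (g • s) (l1 x) := by
  intro v hv
  have hball : g⁻¹ • v ∈ (overlapGraph ρ).ball s (l1 x) :=
    SimpleGraph.ball_mono (by exact_mod_cast card_support_le_l1 x)
      (subset_ball_card_of_preconnected_induce hx hs (mem_support_gact.1 hv))
  have htranslate : g • g⁻¹ • v ∈ (overlapGraph ρ).ball (g • s) (l1 x) :=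
    hom_mem_ball (overlapGraph.smulHom hρ g) hball
  rwa [smul_inv_smul] at htranslate

theorem exists_finite_forall_exists_gact_mem (hρ : Equivariant G ρ) (hS : FinitelyManyOrbits G S)
    (hstab : FiniteStabilizers G T) (n : ℕ) :
    ∃ F : Set (S →₀ ℤ), F.Finite ∧
      ∀ x, HasPreconnectedSupport ρ x → l1 x ≤ n → ∃ g : G, gact g x ∈ F := by
  obtain ⟨R, hR⟩ := id hS
  have hball : (⋃ r ∈ R, (overlapGraph ρ).ball r n).Finite := R.finite_toSet.biUnion fun r _ =>
    finite_ball_of_finite_neighborSet (overlapGraph.finite_neighborSet hρ hS hstab) r n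
  refine ⟨_, finite_setOf_support_subset_l1_le hball n, fun x hconn hxn => ?_⟩
  obtain rfl | hx := eq_or_ne x 0
  · exact ⟨1, by simp [gact_zero, hxn]⟩
  obtain ⟨s, hs⟩ := support_nonempty_iff.2 hx
  obtain ⟨g, r, hr, rfl⟩ := hR s
  refine ⟨g⁻¹, fun v hv => Set.mem_biUnion hr ?_, (l1_gact _ _).trans_le hxn⟩
  have hvr := hconn.support_gact_subset_ball hρ g⁻¹ hs hv
  rw [inv_smul_smul] at hvr
  exact SimpleGraph.ball_mono (by exact_mod_cast hxn) hvr

end Equivariant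

theorem stmt_2_general {G S T M : Type*} [Group G] [MulAction G S] [MulAction G T]
    [AddCommMonoid M] [SemilatticeSup M] [IsOrderedAddMonoid M]
    (ρ : (S →₀ ℤ) →+ (T →₀ ℤ)) (hρ : Equivariant G ρ)
    (hS : FinitelyManyOrbits G S) (hstab : FiniteStabilizers G T)
    (ν : (S →₀ ℤ) → M)
    (hsub : ∀ x y : S →₀ ℤ, ρ x = 0 → ρ y = 0 → ν (x + y) ≤ ν x + ν y)
    (hinv : ∀ (g : G) (x : S →₀ ℤ), ρ x = 0 → ν (gact g x) = ν x) (n : ℕ) :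
    ∃ B : M, ∀ x : S →₀ ℤ, ρ x = 0 → l1 x ≤ n → ν x ≤ B := by
  suffices hlt : ∀ m, ∃ B : M, ∀ x : S →₀ ℤ, ρ x = 0 → l1 x < m → ν x ≤ B by
    simpa only [Nat.lt_succ_iff] using hlt (n + 1)
  intro m
  induction m with
  | zero => exact ⟨0, fun x _ hx => absurd hx (Nat.not_lt_zero _)⟩
  | succ m ih =>
    obtain ⟨B, hB⟩ := ih
    obtain ⟨F, hF, hFmem⟩ := exists_finite_forall_exists_gact_mem hρ hS hstab m
    obtain ⟨C, hC⟩ := (hF.image ν).bddAbove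
    refine ⟨C ⊔ (B + B), fun x hx hxm => ?_⟩
    by_cases hconn : HasPreconnectedSupport ρ x
    · obtain ⟨g, hg⟩ := hFmem x hconn (Nat.lt_succ_iff.1 hxm)
      rw [← hinv g x hx]
      exact le_sup_of_le_left (hC (Set.mem_image_of_mem ν hg))
    · obtain ⟨y, z, rfl, ⟨hy, hyx⟩, hz, hzx⟩ := exists_add_eq_of_not_hasPreconnectedSupport hx hconn
      calc ν (y + z) ≤ ν y + ν z := hsub y z hy hz
        _ ≤ B + B := add_le_add (hB y hy (by omega)) (hB z hz (by omega))
        _ ≤ C ⊔ (B + B) := le_sup_right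

/-- Generalized finiteness: any G-invariant subadditive function on `ker ρ` is
bounded on kernel elements of bounded ℓ1-norm. -/
theorem stmt_2 {G S T : Type*} [Group G] [MulAction G S] [MulAction G T]
    (ρ : (S →₀ ℤ) →+ (T →₀ ℤ)) (hρ : Equivariant G ρ)
    (hS : FinitelyManyOrbits G S) (hT : FinitelyManyOrbits G T)
    (hstab : FiniteStabilizers G T)
    (ν : (S →₀ ℤ) → NNReal)
    (hsub : ∀ x y : S →₀ ℤ, ρ x = 0 → ρ y = 0 → ν (x + y) ≤ ν x + ν y)
    (hinv : ∀ (g : G) (x : S →₀ ℤ), ρ x = 0 → ν (gact g x) = ν x) :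
    ∀ n : ℕ, ∃ B : ℝ, ∀ x : S →₀ ℤ, ρ x = 0 → l1 x ≤ n → (ν x : ℝ) ≤ B := by
  intro n
  obtain ⟨B, hB⟩ := stmt_2_general ρ hρ hS hstab ν hsub hinv n
  exact ⟨B, fun x hx hxn => NNReal.coe_le_coe.2 (hB x hx hxn)⟩
end

section
/- Let G be a group, S and T G-sets, and ρ : ℤ[S] → ℤ[T] a G-equivariant additive homomorphism. For every nonzero z ∈ ker ρ there exist ρ-connected elements x₁, …, x_m ∈ ker ρ such that z = x₁ + ⋯ + x_m, ∑_{i=1}^m ‖x_i‖_S = ‖z‖_S, m ≤ ‖z‖_S, and ‖x_i‖_S ≤ ‖z‖_S for each i. -/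
open Finsupp

/-!
Grow a part of `z` one signed basis element at a time. If `x` is a part of `z` with `ρ x ≠ 0`, then
`ρ x` and `ρ (z - x) = -ρ x` have opposite signs at some `t`, so some signed basis element `v` that
is a part of `z - x` has nontrivial ρ-intersection with `x`, and `x + v` is again a part of `z`.
Elements of `D_n` have norm `n`, whereas parts of `z` have norm at most that of `z`, so the process
must reach `ker ρ`. Norms add up along parts, so subtracting the ρ-connected part just found allows
induction on the norm.
-/

section PermutationModule

variable {S : Type*} {u v x y z : S →₀ ℤ}

theorem SIntTrivial.symm (h : SIntTrivial x y) : SIntTrivial y x :=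
  fun s ↦ mul_comm (x s) (y s) ▸ h s

theorem SIntTrivial.add_left (hx : SIntTrivial x z) (hy : SIntTrivial y z) :
    SIntTrivial (x + y) z := fun s ↦ by
  rw [Finsupp.add_apply, add_mul]
  exact add_nonneg (hx s) (hy s)

theorem isPart_iff_sIntTrivial_sub : IsPart x y ↔ SIntTrivial x (y - x) :=
  forall_congr' fun s ↦ by rw [Finsupp.sub_apply, mul_sub, sub_nonneg, sq]

theorem IsPart.refl (x : S →₀ ℤ) : IsPart x x := fun s ↦ (sq (x s)).le

theorem IsPart.sub_isPart (h : IsPart x y) : IsPart (y - x) y := by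
  rw [isPart_iff_sIntTrivial_sub] at h ⊢
  simpa only [sub_sub_cancel] using h.symm

theorem SIntTrivial.mono_right (h : SIntTrivial x y) (hv : IsPart v y) : SIntTrivial x v := by
  intro s
  have hv_nonneg : 0 ≤ v s * y s := (sq_nonneg _).trans (hv s)
  rcases eq_or_ne (y s) 0 with hy | hy
  · have hv_zero : v s = 0 := by simpa [hy, sq_nonpos_iff] using hv s
    simp [hv_zero]
  · refine nonneg_of_mul_nonneg_left ?_ (pow_pos (abs_pos.2 hy) 2)
    calc 0 ≤ (x s * y s) * (v s * y s) := mul_nonneg (h s) hv_nonneg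
      _ = x s * v s * |y s| ^ 2 := by rw [sq_abs]; ring

theorem IsPart.sIntTrivial_of_isPart_sub (hx : IsPart x z) (hv : IsPart v (z - x)) :
    SIntTrivial x v :=
  (isPart_iff_sIntTrivial_sub.1 hx).mono_right hv

theorem IsPart.add_of_isPart_sub (hx : IsPart x z) (hv : IsPart v (z - x)) :
    IsPart (x + v) z := by
  rw [isPart_iff_sIntTrivial_sub, ← sub_sub]
  exact (hx.sIntTrivial_of_isPart_sub hv.sub_isPart).add_left (isPart_iff_sIntTrivial_sub.1 hv)

@[simp]
theorem l1_zero : l1 (0 : S →₀ ℤ) = 0 := rfl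

theorem l1_add (h : SIntTrivial x y) : l1 (x + y) = l1 x + l1 y := by
  classical
  have l1_eq_sum {w : S →₀ ℤ} (hw : w.support ⊆ x.support ∪ y.support) :
      l1 w = ∑ s ∈ x.support ∪ y.support, (w s).natAbs :=
    Finsupp.sum_of_support_subset w hw (fun _ ↦ Int.natAbs) fun _ _ ↦ Int.natAbs_zero
  rw [l1_eq_sum Finsupp.support_add, l1_eq_sum Finset.subset_union_left,
    l1_eq_sum Finset.subset_union_right, ← Finset.sum_add_distrib]
  refine Finset.sum_congr rfl fun s _ ↦ ?_
  rw [Finsupp.add_apply]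
  rcases mul_nonneg_iff.1 (h s) with ⟨hx, hy⟩ | ⟨hx, hy⟩
  · exact Int.natAbs_add_of_nonneg hx hy
  · exact Int.natAbs_add_of_nonpos hx hy

theorem IsPart.l1_add_l1_sub (h : IsPart x y) : l1 x + l1 (y - x) = l1 y := by
  rw [← l1_add (isPart_iff_sIntTrivial_sub.1 h), add_sub_cancel]

theorem IsPart.l1_le (h : IsPart x y) : l1 x ≤ l1 y :=
  h.l1_add_l1_sub ▸ Nat.le_add_right _ _

theorem InD1.l1_eq_one (h : InD1 u) : l1 u = 1 := by
  obtain ⟨s, rfl | rfl⟩ := h <;>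
    exact (Finsupp.sum_single_index (h := fun _ ↦ Int.natAbs) Int.natAbs_zero).trans rfl

theorem inD1_single_sign {s : S} (hs : x s ≠ 0) : InD1 (single s (x s).sign) := by
  rcases hs.lt_or_gt with h | h
  · exact ⟨s, .inr (by rw [Int.sign_eq_neg_one_of_neg h])⟩
  · exact ⟨s, .inl (by rw [Int.sign_eq_one_of_pos h])⟩

theorem isPart_single_sign (x : S →₀ ℤ) (s : S) : IsPart (single s (x s).sign) x := by
  intro r
  rcases eq_or_ne s r with rfl | h
  · rw [Finsupp.single_eq_same, Int.sign_mul_self_eq_natAbs]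
    rcases lt_trichotomy (x s) 0 with h | h | h
    · rw [Int.sign_eq_neg_one_of_neg h]; omega
    · simp [h]
    · rw [Int.sign_eq_one_of_pos h]; omega
  · simp [Finsupp.single_eq_of_ne' h]

theorem exists_inD1_isPart (hx : x ≠ 0) : ∃ u, InD1 u ∧ IsPart u x := by
  obtain ⟨s, hs⟩ := Finsupp.ne_iff.1 hx
  exact ⟨_, inD1_single_sign hs, isPart_single_sign x s⟩

theorem exists_inD1_isPart_map_pos {A : Type*} [AddCommGroup A] [LinearOrder A]
    [IsOrderedAddMonoid A] (f : (S →₀ ℤ) →+ A) (hx : 0 < f x) :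
    ∃ u, InD1 u ∧ IsPart u x ∧ 0 < f u := by
  by_contra! hf
  have map_single_nonpos : ∀ s ∈ x.support, f (single s (x s)) ≤ 0 := by
    intro s hs
    have single_eq_nsmul : single s (x s) = (x s).natAbs • single s (x s).sign := by
      rw [Finsupp.smul_single, nsmul_eq_mul, mul_comm, Int.sign_mul_natAbs]
    rw [single_eq_nsmul, map_nsmul]
    exact nsmul_nonpos
      (hf _ (inD1_single_sign (Finsupp.mem_support_iff.1 hs)) (isPart_single_sign x s)) _
  refine hx.not_ge ?_
  calc f x = ∑ s ∈ x.support, f (single s (x s)) := by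
        rw [← map_sum]; exact congrArg f (Finsupp.sum_single x).symm
    _ ≤ 0 := Finset.sum_nonpos map_single_nonpos

end PermutationModule

section RhoConnected

variable {S T : Type*} {ρ : (S →₀ ℤ) →+ (T →₀ ℤ)} {v x z : S →₀ ℤ} {n : ℕ}

theorem exists_isPart_rhoInt_of_map_add_eq_zero {y : S →₀ ℤ} (hxy : ρ x + ρ y = 0)
    (hx : ρ x ≠ 0) : ∃ v, InD1 v ∧ IsPart v y ∧ RhoInt ρ x v := by
  obtain ⟨t, ht : ρ x t ≠ 0⟩ := Finsupp.ne_iff.1 hx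
  have hy : ρ y t = -ρ x t := by rw [eq_neg_of_add_eq_zero_right hxy, Finsupp.neg_apply]
  let f : (S →₀ ℤ) →+ ℤ :=
    (AddMonoidHom.mulLeft (ρ x t)).comp ((Finsupp.applyAddHom t).comp ρ)
  have hfx : 0 < f x := mul_self_pos.2 ht
  have hfy : 0 < (-f) y := by
    change 0 < -(ρ x t * ρ y t)
    rw [hy, mul_neg, neg_neg]
    exact hfx
  obtain ⟨u, hu, hux, hfu⟩ := exists_inD1_isPart_map_pos f hfx
  obtain ⟨v, hv, hvy, hfv⟩ := exists_inD1_isPart_map_pos (-f) hfy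
  refine ⟨v, hv, hvy, u, v, hu, hv, hux, IsPart.refl v, t, ?_⟩
  have hfuv : f u * f v < 0 := mul_neg_of_pos_of_neg hfu (neg_pos.1 hfv)
  refine neg_of_mul_neg_right ?_ (sq_nonneg (ρ x t))
  calc ρ x t ^ 2 * (ρ u t * ρ v t) = (ρ x t * ρ u t) * (ρ x t * ρ v t) := by ring
    _ < 0 := hfuv

theorem InD1.inD_one (ρ : (S →₀ ℤ) →+ (T →₀ ℤ)) (hv : InD1 v) : InD ρ 1 v :=
  ⟨fun _ ↦ v, fun _ _ ↦ hv, by simp, fun _ h₁ h₂ ↦ absurd h₂ h₁.not_gt⟩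

theorem InD.add (hx : InD ρ n x) (hv : InD1 v) (hS : SIntTrivial x v) (hρ : RhoInt ρ x v) :
    InD ρ (n + 1) (x + v) := by
  obtain ⟨c, hc, rfl, hstep⟩ := hx
  have sum_update {k : ℕ} (hk : k ≤ n) :
      ∑ i ∈ Finset.range k, Function.update c n v i = ∑ i ∈ Finset.range k, c i :=
    Finset.sum_update_of_notMem (by simpa using hk) c v
  refine ⟨Function.update c n v, fun i hi ↦ ?_, ?_, fun k hk₁ hk ↦ ?_⟩
  · rcases (Nat.lt_succ_iff.1 hi).eq_or_lt with rfl | hi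
    · simpa using hv
    · simpa [hi.ne] using hc i hi
  · rw [Finset.sum_range_succ, sum_update le_rfl, Function.update_self]
  · rw [sum_update (Nat.lt_succ_iff.1 hk)]
    rcases (Nat.lt_succ_iff.1 hk).eq_or_lt with rfl | hk
    · simpa using ⟨hS, hρ⟩
    · simpa [hk.ne] using hstep k hk₁ hk

theorem InD.l1_eq (hx : InD ρ n x) : l1 x = n := by
  obtain ⟨c, hc, rfl, hstep⟩ := hx
  have l1_sum : ∀ k ≤ n, l1 (∑ i ∈ Finset.range k, c i) = k := by
    intro k
    induction k with
    | zero => simp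
    | succ k ih =>
      intro hk
      have hS : SIntTrivial (∑ i ∈ Finset.range k, c i) (c k) := by
        rcases k.eq_zero_or_pos with rfl | hk_pos
        · simp [SIntTrivial]
        · exact (hstep k hk_pos hk).1
      rw [Finset.sum_range_succ, l1_add hS, ih (by omega), (hc k hk).l1_eq_one]
  exact l1_sum n le_rfl

theorem RhoConnected.l1_pos (hx : RhoConnected ρ x) : 0 < l1 x := by
  obtain ⟨n, hn, hxn⟩ := hx
  exact hxn.l1_eq ▸ hn

theorem InD.exists_succ_isPart (hx : InD ρ n x) (hxz : IsPart x z) (hz : ρ z = 0)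
    (hρx : ρ x ≠ 0) : ∃ y, InD ρ (n + 1) y ∧ IsPart y z := by
  have hsum : ρ x + ρ (z - x) = 0 := by rw [← map_add, add_sub_cancel, hz]
  obtain ⟨v, hv, hvz, hxv⟩ := exists_isPart_rhoInt_of_map_add_eq_zero hsum hρx
  exact ⟨x + v, hx.add hv (hxz.sIntTrivial_of_isPart_sub hvz) hxv, hxz.add_of_isPart_sub hvz⟩

theorem exists_rhoConnected_isPart_map_eq_zero (hz : ρ z = 0) (hz0 : z ≠ 0) :
    ∃ x, RhoConnected ρ x ∧ IsPart x z ∧ ρ x = 0 := by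
  by_contra! h
  have exists_inD_isPart : ∀ n, 1 ≤ n → ∃ x, InD ρ n x ∧ IsPart x z := by
    intro n hn
    induction n, hn using Nat.le_induction with
    | base =>
      obtain ⟨u, hu, huz⟩ := exists_inD1_isPart hz0
      exact ⟨u, hu.inD_one ρ, huz⟩
    | succ n hn ih =>
      obtain ⟨x, hx, hxz⟩ := ih
      exact hx.exists_succ_isPart hxz hz (h x ⟨n, hn, hx⟩ hxz)
  obtain ⟨x, hx, hxz⟩ := exists_inD_isPart (l1 z + 1) (Nat.le_add_left _ _)
  exact (hx.l1_eq ▸ hxz.l1_le).not_gt (Nat.lt_succ_self _)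

theorem exists_list_rhoConnected_sum_eq (ρ : (S →₀ ℤ) →+ (T →₀ ℤ)) (z : S →₀ ℤ) (hz : ρ z = 0) :
    ∃ L : List (S →₀ ℤ), (∀ x ∈ L, RhoConnected ρ x ∧ ρ x = 0) ∧
      L.sum = z ∧ (L.map l1).sum = l1 z := by
  induction hN : l1 z using Nat.strong_induction_on generalizing z with
  | _ N ih =>
    subst hN
    rcases eq_or_ne z 0 with rfl | hz0
    · exact ⟨[], by simp⟩
    obtain ⟨x, hx, hxz, hρx⟩ := exists_rhoConnected_isPart_map_eq_zero hz hz0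
    have hl1 : l1 x + l1 (z - x) = l1 z := hxz.l1_add_l1_sub
    have hlt : l1 (z - x) < l1 z := by have := hx.l1_pos; omega
    obtain ⟨L, hL, hsum, hnorm⟩ := ih _ hlt (z - x) (by rw [map_sub, hz, hρx, sub_zero]) rfl
    refine ⟨x :: L, List.forall_mem_cons.2 ⟨⟨hx, hρx⟩, hL⟩, ?_, ?_⟩
    · rw [List.sum_cons, hsum, add_sub_cancel]
    · rw [List.map_cons, List.sum_cons, hnorm, hl1]

end RhoConnected

theorem stmt_5_general {S T : Type*} (ρ : (S →₀ ℤ) →+ (T →₀ ℤ)) (z : S →₀ ℤ) (hz : ρ z = 0) :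
    ∃ (m : ℕ) (x : Fin m → (S →₀ ℤ)),
      (∀ i, RhoConnected ρ (x i)) ∧ (∀ i, ρ (x i) = 0) ∧
      z = ∑ i, x i ∧ (∑ i, l1 (x i)) = l1 z ∧ m ≤ l1 z ∧ (∀ i, l1 (x i) ≤ l1 z) := by
  obtain ⟨L, hL, hsum, hnorm⟩ := exists_list_rhoConnected_sum_eq ρ z hz
  have l1_pos : ∀ n ∈ L.map l1, 1 ≤ n :=
    List.forall_mem_map.2 fun x hx ↦ (hL x hx).1.l1_pos
  have length_le : L.length ≤ l1 z := by
    rw [← hnorm, ← L.length_map l1]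
    exact List.length_le_sum_of_one_le _ l1_pos
  have l1_le : ∀ x ∈ L, l1 x ≤ l1 z := fun x hx ↦
    hnorm ▸ List.single_le_sum (fun _ _ ↦ Nat.zero_le _) _ (List.mem_map_of_mem hx)
  exact ⟨L.length, L.get, fun i ↦ (hL _ (L.get_mem i)).1, fun i ↦ (hL _ (L.get_mem i)).2,
    hsum.symm.trans (Fin.sum_univ_getElem L).symm, (Fin.sum_univ_fun_getElem L l1).trans hnorm,
    length_le, fun i ↦ l1_le _ (L.get_mem i)⟩

/-- Decomposition of kernel elements into ρ-connected parts, with norm control. -/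
theorem stmt_5 {G S T : Type*} [Group G] [MulAction G S] [MulAction G T]
    (ρ : (S →₀ ℤ) →+ (T →₀ ℤ)) (hρ : Equivariant G ρ)
    (z : S →₀ ℤ) (hz : ρ z = 0) (hz0 : z ≠ 0) :
    ∃ (m : ℕ) (x : Fin m → (S →₀ ℤ)),
      (∀ i, RhoConnected ρ (x i)) ∧ (∀ i, ρ (x i) = 0) ∧
      z = ∑ i, x i ∧ (∑ i, l1 (x i)) = l1 z ∧ m ≤ l1 z ∧ (∀ i, l1 (x i) ≤ l1 z) :=
  stmt_5_general ρ z hz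
end
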